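/- Let a, b ∈ ℝⁿ be nonzero vectors and let L be an integer with L ≥ n³. Define a' = ‖a‖·Round(a/‖a‖, L) and b' = ‖b‖·Round(b/‖b‖, L), and let I = supp(a) ∩ supp(b). Then max(‖a'_I‖·‖b'‖, ‖a'‖·‖b'_I‖) ≤ 2·max(‖a_I‖·‖b‖, ‖a‖·‖b_I‖). -/

import Mathlib

/-!
Rounding a unit vector `z` lowers each square `z i ^ 2` by less than `1 / L` and gives the total
loss `δ < n / L` back to a single coordinate, so it preserves norms. That coordinate `i*` is a
largest one, hence `1 ≤ n * z i* ^ 2` and `δ ≤ n ^ 2 / L * z i* ^ 2`: every square grows by a factor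
of at most `1 + n ^ 2 / L`, and the error scale by a factor of at most `√(1 + n ^ 2 / L)`.
-/

open Finset

/-- An index `i*` maximizing `|z i|`. -/
noncomputable def maxIndex {n : ℕ} [NeZero n] (z : Fin n → ℝ) : Fin n :=
  (Finset.exists_max_image Finset.univ (fun i => |z i|)
    (Finset.univ_nonempty_iff.mpr ⟨⟨0, Nat.pos_of_ne_zero (NeZero.ne n)⟩⟩)).choose

/-- `Round(z, L)`: first set `z̃ i = sign(z i) ⬝ √(⌊z i ^ 2 ⬝ L⌋ / L)` for every `i`; then,
letting `i*` be an index maximizing `|z i|` and `δ = 1 - ∑ i, z̃ i ^ 2`, replace `z̃ i*` by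
`sign(z i*) ⬝ √(z̃ i* ^ 2 + δ)`. -/
noncomputable def roundVec {n : ℕ} (z : Fin n → ℝ) (L : ℕ) : Fin n → ℝ :=
  if hn : n = 0 then z
  else
    haveI : NeZero n := ⟨hn⟩
    let zt : Fin n → ℝ := fun i => Real.sign (z i) * Real.sqrt ((⌊(z i) ^ 2 * L⌋ : ℝ) / L)
    let istar : Fin n := maxIndex z
    fun i => if i = istar then
        Real.sign (z istar) * Real.sqrt ((zt istar) ^ 2 + (1 - ∑ j, (zt j) ^ 2))
      else zt i

/-- The Euclidean norm `‖x‖ = √(∑ i, x i ^ 2)` of a vector `x : Fin n → ℝ`. -/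
noncomputable def vnorm {n : ℕ} (x : Fin n → ℝ) : ℝ :=
  Real.sqrt (∑ i, (x i) ^ 2)

/-- `‖x_S‖`: the Euclidean norm of the vector `x` restricted to the index set `S`
(agreeing with `x` on `S` and zero elsewhere). -/
noncomputable def vnormOn {n : ℕ} (S : Finset (Fin n)) (x : Fin n → ℝ) : ℝ :=
  Real.sqrt (∑ i ∈ S, (x i) ^ 2)

/-- The support `{i : x i ≠ 0}` of a vector, as a `Finset`. -/
noncomputable def supp {n : ℕ} (x : Fin n → ℝ) : Finset (Fin n) :=
  Finset.univ.filter fun i => x i ≠ 0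

lemma sq_sign_mul_sqrt {x t : ℝ} (hx : x ≠ 0) (ht : 0 ≤ t) : (Real.sign x * √t) ^ 2 = t := by
  rcases Real.sign_apply_eq_of_ne_zero x hx with h | h <;> simp [h, Real.sq_sqrt ht]

/-- The square `x ^ 2` rounded down to a multiple of `1 / L`: the square of a coordinate of
`Round(z, L)` before the correction by `δ`. -/
noncomputable def floorSq (x : ℝ) (L : ℕ) : ℝ :=
  (⌊x ^ 2 * L⌋ : ℝ) / L

lemma floorSq_nonneg (x : ℝ) (L : ℕ) : 0 ≤ floorSq x L :=
  div_nonneg (mod_cast Int.floor_nonneg.mpr (by positivity)) L.cast_nonneg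

lemma floorSq_le (x : ℝ) (L : ℕ) : floorSq x L ≤ x ^ 2 :=
  div_le_of_le_mul₀ L.cast_nonneg (sq_nonneg x) (Int.floor_le _)

lemma sq_sub_inv_le_floorSq (x : ℝ) {L : ℕ} (hL : 0 < L) : x ^ 2 - 1 / L ≤ floorSq x L := by
  have hL' : (0 : ℝ) < L := mod_cast hL
  rw [floorSq, le_div_iff₀ hL', sub_mul, one_div_mul_cancel hL'.ne']
  exact (Int.sub_one_lt_floor _).le

lemma sq_sign_mul_sqrt_floor (x : ℝ) (L : ℕ) :
    (Real.sign x * √((⌊x ^ 2 * L⌋ : ℝ) / L)) ^ 2 = floorSq x L := by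
  rcases eq_or_ne x 0 with rfl | hx
  · simp [floorSq]
  · exact sq_sign_mul_sqrt hx (floorSq_nonneg x L)

lemma sum_floorSq_le {ι : Type*} [Fintype ι] (z : ι → ℝ) (L : ℕ) :
    ∑ i, floorSq (z i) L ≤ ∑ i, z i ^ 2 :=
  sum_le_sum fun i _ => floorSq_le (z i) L

lemma sum_sq_sub_card_div_le_sum_floorSq {ι : Type*} [Fintype ι] (z : ι → ℝ) {L : ℕ} (hL : 0 < L) :
    ∑ i, z i ^ 2 - Fintype.card ι / L ≤ ∑ i, floorSq (z i) L :=
  calc ∑ i, z i ^ 2 - Fintype.card ι / L = ∑ i, (z i ^ 2 - 1 / (L : ℝ)) := by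
        simp [sum_sub_distrib, div_eq_mul_inv]
    _ ≤ ∑ i, floorSq (z i) L := sum_le_sum fun i _ => sq_sub_inv_le_floorSq (z i) hL

section Round

variable {n : ℕ} [NeZero n] {z : Fin n → ℝ}

lemma abs_le_abs_maxIndex (z : Fin n → ℝ) (i : Fin n) : |z i| ≤ |z (maxIndex z)| :=
  (exists_max_image univ (fun i => |z i|) univ_nonempty).choose_spec.2 i (mem_univ i)

lemma sum_sq_le_mul_sq_maxIndex (z : Fin n → ℝ) : ∑ i, z i ^ 2 ≤ n * z (maxIndex z) ^ 2 := by
  simpa using sum_le_card_nsmul univ (fun i => z i ^ 2) (z (maxIndex z) ^ 2)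
    fun i _ => sq_le_sq.mpr (abs_le_abs_maxIndex z i)

lemma maxIndex_apply_ne_zero (hz : ∑ i, z i ^ 2 = 1) : z (maxIndex z) ≠ 0 := by
  intro h
  have hsum := sum_sq_le_mul_sq_maxIndex z
  norm_num [hz, h] at hsum

lemma roundVec_sq (hz : ∑ i, z i ^ 2 = 1) (L : ℕ) (i : Fin n) :
    roundVec z L i ^ 2 =
      floorSq (z i) L + if i = maxIndex z then 1 - ∑ j, floorSq (z j) L else 0 := by
  simp only [roundVec, dif_neg (NeZero.ne n), sq_sign_mul_sqrt_floor]
  split_ifs with hi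
  · have hδ : 0 ≤ 1 - ∑ j, floorSq (z j) L := sub_nonneg.mpr (hz ▸ sum_floorSq_le z L)
    rw [hi, sq_sign_mul_sqrt (maxIndex_apply_ne_zero hz) (add_nonneg (floorSq_nonneg _ L) hδ)]
  · rw [sq_sign_mul_sqrt_floor, add_zero]

lemma sum_roundVec_sq (hz : ∑ i, z i ^ 2 = 1) (L : ℕ) : ∑ i, roundVec z L i ^ 2 = 1 := by
  simp [roundVec_sq hz, sum_add_distrib]

lemma roundVec_sq_le (hz : ∑ i, z i ^ 2 = 1) {L : ℕ} (hL : 0 < L) (i : Fin n) :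
    roundVec z L i ^ 2 ≤ (1 + n ^ 2 / L) * z i ^ 2 := by
  rw [roundVec_sq hz, one_add_mul]
  refine add_le_add (floorSq_le (z i) L) ?_
  split_ifs with hi
  · have hloss := sum_sq_sub_card_div_le_sum_floorSq z hL
    have hmax := sum_sq_le_mul_sq_maxIndex z
    rw [hz] at hloss hmax
    rw [Fintype.card_fin] at hloss
    calc 1 - ∑ j, floorSq (z j) L ≤ n / L * 1 := by linarith
      _ ≤ n / L * (n * z (maxIndex z) ^ 2) := by gcongr
      _ = n ^ 2 / L * z i ^ 2 := by rw [hi]; ring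
  · positivity

end Round

section Scaling

variable {n : ℕ} {a : Fin n → ℝ}

/-- The vector `‖a‖ ⬝ Round(a/‖a‖, L)`, that is, the vectors `a'` and `b'` of the paper. -/
noncomputable def roundScaled (a : Fin n → ℝ) (L : ℕ) : Fin n → ℝ :=
  fun i => vnorm a * roundVec (fun j => a j / vnorm a) L i

lemma neZero_of_vec_ne_zero (ha : a ≠ 0) : NeZero n :=
  (Function.ne_iff.mp ha).choose.neZero

lemma vnorm_nonneg (a : Fin n → ℝ) : 0 ≤ vnorm a :=
  Real.sqrt_nonneg _

lemma vnorm_sq (a : Fin n → ℝ) : vnorm a ^ 2 = ∑ i, a i ^ 2 :=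
  Real.sq_sqrt (sum_nonneg fun i _ => sq_nonneg (a i))

lemma vnorm_pos (ha : a ≠ 0) : 0 < vnorm a := by
  obtain ⟨i, hi⟩ := Function.ne_iff.mp ha
  exact Real.sqrt_pos.mpr
    (sum_pos' (fun j _ => sq_nonneg (a j)) ⟨i, mem_univ i, sq_pos_of_ne_zero hi⟩)

lemma sum_sq_div_vnorm (ha : a ≠ 0) : ∑ i, (a i / vnorm a) ^ 2 = 1 := by
  simp only [div_pow]
  rw [← sum_div, ← vnorm_sq, div_self (pow_pos (vnorm_pos ha) 2).ne']

lemma vnorm_roundScaled (ha : a ≠ 0) (L : ℕ) : vnorm (roundScaled a L) = vnorm a := by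
  have := neZero_of_vec_ne_zero ha
  rw [← sq_eq_sq₀ (vnorm_nonneg _) (vnorm_nonneg _), vnorm_sq]
  simp only [roundScaled, mul_pow]
  rw [← mul_sum, sum_roundVec_sq (sum_sq_div_vnorm ha), mul_one]

lemma roundScaled_sq_le (ha : a ≠ 0) {L : ℕ} (hL : 0 < L) (i : Fin n) :
    roundScaled a L i ^ 2 ≤ (1 + n ^ 2 / L) * a i ^ 2 := by
  have := neZero_of_vec_ne_zero ha
  calc roundScaled a L i ^ 2 = vnorm a ^ 2 * roundVec (fun j => a j / vnorm a) L i ^ 2 :=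
        mul_pow _ _ 2
    _ ≤ vnorm a ^ 2 * ((1 + n ^ 2 / L) * (a i / vnorm a) ^ 2) := by
        gcongr
        exact roundVec_sq_le (sum_sq_div_vnorm ha) hL i
    _ = (1 + n ^ 2 / L) * a i ^ 2 := by
        have := (vnorm_pos ha).ne'
        field_simp

lemma vnormOn_le_sqrt_mul {S : Finset (Fin n)} {x y : Fin n → ℝ} {c : ℝ} (hc : 0 ≤ c)
    (h : ∀ i ∈ S, x i ^ 2 ≤ c * y i ^ 2) : vnormOn S x ≤ √c * vnormOn S y := by
  rw [vnormOn, vnormOn, ← Real.sqrt_mul hc, mul_sum]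
  exact Real.sqrt_le_sqrt (sum_le_sum h)

lemma vnormOn_roundScaled_le (S : Finset (Fin n)) (ha : a ≠ 0) {L : ℕ} (hL : 0 < L) :
    vnormOn S (roundScaled a L) ≤ √(1 + n ^ 2 / L) * vnormOn S a :=
  vnormOn_le_sqrt_mul (by positivity) fun i _ => roundScaled_sq_le ha hL i

end Scaling

lemma sqrt_one_add_sq_div_le_two {n L : ℕ} (hL : n ^ 2 ≤ L) : √(1 + (n : ℝ) ^ 2 / L) ≤ 2 := by
  have h : (n : ℝ) ^ 2 / L ≤ 1 := div_le_one_of_le₀ (mod_cast hL) L.cast_nonneg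
  rw [Real.sqrt_le_left zero_le_two]
  linarith

theorem round_error_scale_general {n : ℕ} (S : Finset (Fin n)) {a b : Fin n → ℝ} (ha : a ≠ 0)
    (hb : b ≠ 0) {L : ℕ} (hL : 0 < L) :
    max (vnormOn S (roundScaled a L) * vnorm (roundScaled b L))
        (vnorm (roundScaled a L) * vnormOn S (roundScaled b L))
      ≤ √(1 + n ^ 2 / L) * max (vnormOn S a * vnorm b) (vnorm a * vnormOn S b) := by
  rw [vnorm_roundScaled ha, vnorm_roundScaled hb, mul_max_of_nonneg _ _ (Real.sqrt_nonneg _),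
    ← mul_assoc, mul_left_comm]
  exact max_le_max
    (mul_le_mul_of_nonneg_right (vnormOn_roundScaled_le S ha hL) (vnorm_nonneg b))
    (mul_le_mul_of_nonneg_left (vnormOn_roundScaled_le S hb hL) (vnorm_nonneg a))

/-- Rounding preserves the error scale: for nonzero `a, b ∈ ℝⁿ` and an integer `L ≥ n³`,
the rounded vectors `a' = ‖a‖ ⬝ Round(a/‖a‖, L)` and `b' = ‖b‖ ⬝ Round(b/‖b‖, L)` satisfy
`max(‖a'_I‖ ‖b'‖, ‖a'‖ ‖b'_I‖) ≤ 2 max(‖a_I‖ ‖b‖, ‖a‖ ‖b_I‖)`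
where `I = supp a ∩ supp b`. -/
theorem round_error_scale {n : ℕ} (a b : Fin n → ℝ) (ha0 : a ≠ 0) (hb0 : b ≠ 0)
    (L : ℕ) (hL : n ^ 3 ≤ L)
    (a' b' : Fin n → ℝ)
    (ha' : a' = fun i => vnorm a * roundVec (fun j => a j / vnorm a) L i)
    (hb' : b' = fun i => vnorm b * roundVec (fun j => b j / vnorm b) L i) :
    max (vnormOn (supp a ∩ supp b) a' * vnorm b') (vnorm a' * vnormOn (supp a ∩ supp b) b')
      ≤ 2 * max (vnormOn (supp a ∩ supp b) a * vnorm b)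
          (vnorm a * vnormOn (supp a ∩ supp b) b) := by
  have hn : 0 < n := (neZero_of_vec_ne_zero ha0).pos
  have hL_sq : n ^ 2 ≤ L := (Nat.pow_le_pow_right hn (Nat.le_succ 2)).trans hL
  subst ha' hb'
  exact (round_error_scale_general _ ha0 hb0 ((pow_pos hn 3).trans_le hL)).trans <|
    mul_le_mul_of_nonneg_right (sqrt_one_add_sq_div_le_two hL_sq) <|
      le_max_of_le_left (mul_nonneg (Real.sqrt_nonneg _) (vnorm_nonneg b))
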